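/- Γ₆^♮ is contained in the subgroup of Sp(4,ℚ) generated by the matrix J₆ together with all matrices j(δ,[m,n;k]) with δ ∈ Γ(6) and m,n,k ∈ ℤ. -/

import Mathlib

open Matrix Polynomial

/-- 4×4 integer matrices. -/
abbrev M4 : Type := Matrix (Fin 4) (Fin 4) ℤ

/-- The standard symplectic form matrix J = [[0, I₂], [−I₂, 0]]. -/
def J4 : M4 := !![0,0,1,0; 0,0,0,1; -1,0,0,0; 0,-1,0,0]

/-- Sp(4,ℤ): integer matrices γ with ᵗγ·J·γ = J. -/
def Sp4Z : Set M4 := {γ | γᵀ * J4 * γ = J4}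

/-- The congruence pattern [[6,1,6,6],[6,6,6,36],[6,1,6,6],[1,1,1,6]]. -/
def pat6 : Matrix (Fin 4) (Fin 4) ℤ := !![6,1,6,6; 6,6,6,36; 6,1,6,6; 1,1,1,6]

/-- Γ₆^♮: elements of Sp(4,ℤ) with γ − I₄ entrywise in the pattern. -/
def Gamma6nat : Set M4 := {γ | γ ∈ Sp4Z ∧ ∀ i j, pat6 i j ∣ (γ - 1) i j}

/-- ζ = diag(−1,1,−1,1). -/
def zetaM : M4 := !![-1,0,0,0; 0,1,0,0; 0,0,-1,0; 0,0,0,1]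

/-- Γ₆^bil = Γ₆^♮ ∪ ζ·Γ₆^♮. -/
def Gamma6bil : Set M4 := Gamma6nat ∪ (fun γ => zetaM * γ) '' Gamma6nat

/-- j(γ,[m,n;k]) for γ = [[a,b],[c,d]] : the matrix [[a,m,c,0],[0,1,0,0],[b,n,d,0],[n,k,−m,1]]. -/
def jmat (a b c d m n k : ℤ) : M4 := !![a,m,c,0; 0,1,0,0; b,n,d,0; n,k,-m,1]

/-- 4×4 rational matrices. -/
abbrev M4Q : Type := Matrix (Fin 4) (Fin 4) ℚ

/-- J₆ = [[0,0,−1,0],[0,0,0,−6],[1,0,0,0],[0,1/6,0,0]] ∈ Sp(4,ℚ). -/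
def J6mat : M4Q := !![0,0,-1,0; 0,0,0,-6; 1,0,0,0; 0,1/6,0,0]

/-- The generators: J₆ together with all j(δ,[m,n;k]) for δ ∈ Γ(6), viewed as
units of the matrix ring. -/
def genSet : Set M4Qˣ :=
  {u | (↑u : M4Q) = J6mat ∨
    ∃ a b c d m n k : ℤ, a * d - b * c = 1 ∧
      (6:ℤ) ∣ a - 1 ∧ (6:ℤ) ∣ b ∧ (6:ℤ) ∣ c ∧ (6:ℤ) ∣ d - 1 ∧
      (↑u : M4Q) = (jmat a b c d m n k).map (Int.cast : ℤ → ℚ)}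

/-- An integral matrix whose rational image lies in the generated subgroup. -/
def InGen (γ : M4) : Prop :=
  ∃ u ∈ Subgroup.closure genSet, (↑u : M4Q) = γ.map (Int.cast : ℤ → ℚ)

lemma map_mul_cast (A B : M4) :
    (A * B).map (Int.cast : ℤ → ℚ) = A.map (Int.cast : ℤ → ℚ) * B.map (Int.cast : ℤ → ℚ) :=
  Matrix.map_mul (f := Int.castRingHom ℚ)

lemma map_one_cast : (1 : M4).map (Int.cast : ℤ → ℚ) = 1 :=
  Matrix.map_one _ (by simp) (by simp)

lemma InGen.of_mul {γ E : M4} (hE : InGen E) (h : InGen (γ * E)) : InGen γ := by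
  obtain ⟨v, hv, hvE⟩ := hE
  obtain ⟨u, hu, huE⟩ := h
  refine ⟨u * v⁻¹, mul_mem hu (inv_mem hv), ?_⟩
  rw [Units.val_mul, huE, map_mul_cast, ← hvE, mul_assoc, Units.mul_inv, mul_one]

lemma jmat_inGen_aux (a b c d m n k : ℤ) (h : a * d - b * c = 1)
    (ha : (6:ℤ) ∣ a - 1) (hb : (6:ℤ) ∣ b) (hc : (6:ℤ) ∣ c) (hd : (6:ℤ) ∣ d - 1)
    (B : M4) (h1 : jmat a b c d m n k * B = 1) :
    InGen (jmat a b c d m n k) := by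
  have h2 := mul_eq_one_comm.mp h1
  refine ⟨⟨(jmat a b c d m n k).map Int.cast, B.map Int.cast, ?_, ?_⟩, ?_, rfl⟩
  · rw [← map_mul_cast, h1, map_one_cast]
  · rw [← map_mul_cast, h2, map_one_cast]
  · exact Subgroup.subset_closure (Or.inr ⟨a, b, c, d, m, n, k, h, ha, hb, hc, hd, rfl⟩)

lemma levi_inGen (a b c d : ℤ) (h : a * d - b * c = 1)
    (ha : (6:ℤ) ∣ a - 1) (hb : (6:ℤ) ∣ b) (hc : (6:ℤ) ∣ c) (hd : (6:ℤ) ∣ d - 1) :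
    InGen (jmat a b c d 0 0 0) := by
  refine jmat_inGen_aux a b c d 0 0 0 h ha hb hc hd (jmat d (-b) (-c) a 0 0 0) ?_
  ext i j
  fin_cases i <;> fin_cases j <;> simp [jmat, Matrix.mul_apply, Fin.sum_univ_four] <;>
    first
    | ring1
    | linear_combination h

lemma bmat_inGen (m n k : ℤ) : InGen (jmat 1 0 0 1 m n k) := by
  refine jmat_inGen_aux 1 0 0 1 m n k (by norm_num) (by norm_num) (by norm_num) (by norm_num)
    (by norm_num) (jmat 1 0 0 1 (-m) (-n) (-k)) ?_
  ext i j
  fin_cases i <;> fin_cases j <;> simp [jmat, Matrix.mul_apply, Fin.sum_univ_four] <;> ring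

lemma InGen.mul {A B : M4} (hA : InGen A) (hB : InGen B) : InGen (A * B) := by
  obtain ⟨u, hu, e⟩ := hA
  obtain ⟨v, hv, f⟩ := hB
  exact ⟨u * v, mul_mem hu hv, by rw [Units.val_mul, e, f, map_mul_cast]⟩

/-- The opposite Heisenberg elements. -/
def cmat (m n k : ℤ) : M4 := !![1,0,0,-6*m; 6*n,1,-6*m,36*k; 0,0,1,-6*n; 0,0,0,1]

/-- `J₆` as a unit. -/
def J6u : M4Qˣ where
  val := J6mat
  inv := -J6mat
  val_inv := by
    ext i j
    fin_cases i <;> fin_cases j <;> simp [J6mat, Matrix.mul_apply, Fin.sum_univ_four]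
  inv_val := by
    ext i j
    fin_cases i <;> fin_cases j <;> simp [J6mat, Matrix.mul_apply, Fin.sum_univ_four]

lemma cmat_inGen (m n k : ℤ) : InGen (cmat m n k) := by
  obtain ⟨u, hu, hu'⟩ := bmat_inGen (-n) m (-k)
  have hJ : J6u ∈ Subgroup.closure genSet := Subgroup.subset_closure (Or.inl rfl)
  refine ⟨J6u * u * J6u⁻¹, mul_mem (mul_mem hJ hu) (inv_mem hJ), ?_⟩
  rw [Units.val_mul, Units.val_mul, hu']
  change J6mat * _ * (-J6mat) = _
  ext i j
  fin_cases i <;> fin_cases j <;>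
    simp [J6mat, cmat, jmat, Matrix.mul_apply, Matrix.vecMul, dotProduct,
      Fin.sum_univ_four] <;> ring

lemma Gamma6nat_mul {A B : M4} (hA : A ∈ Gamma6nat) (hB : B ∈ Gamma6nat) :
    A * B ∈ Gamma6nat := by
  obtain ⟨hA, pA⟩ := hA
  obtain ⟨hB, pB⟩ := hB
  refine ⟨?_, fun i j => ?_⟩
  · change (A * B)ᵀ * J4 * (A * B) = J4
    change Aᵀ * J4 * A = J4 at hA
    change Bᵀ * J4 * B = J4 at hB
    calc (A * B)ᵀ * J4 * (A * B) = Bᵀ * (Aᵀ * J4 * A) * B := by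
          rw [Matrix.transpose_mul]; simp only [mul_assoc]
      _ = J4 := by rw [hA, hB]
  · have e : A * B - 1 = (A - 1) * (B - 1) + (A - 1) + (B - 1) := by noncomm_ring
    rw [e, Matrix.add_apply, Matrix.add_apply, Matrix.mul_apply]
    refine dvd_add (dvd_add (Finset.dvd_sum fun k _ => ?_) (pA i j)) (pB i j)
    refine dvd_trans ?_ (mul_dvd_mul (pA i k) (pB k j))
    revert i j k
    decide

lemma bmat_mem (m n k : ℤ) : jmat 1 0 0 1 m n k ∈ Gamma6nat := by
  refine ⟨?_, fun i j => ?_⟩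
  · change _ = _
    ext i j
    fin_cases i <;> fin_cases j <;>
      simp [jmat, J4, Matrix.mul_apply, Fin.sum_univ_four] <;> ring
  · fin_cases i <;> fin_cases j <;> simp [jmat, pat6]

lemma cmat_mem (m n k : ℤ) : cmat m n k ∈ Gamma6nat := by
  refine ⟨?_, fun i j => ?_⟩
  · change _ = _
    ext i j
    fin_cases i <;> fin_cases j <;>
      simp [cmat, J4, Matrix.mul_apply, Fin.sum_univ_four] <;> ring
  · fin_cases i <;> fin_cases j <;> simp [cmat, pat6]

/-- The second row, in normalised coordinates. -/
def Row (γ : M4) (a b c d : ℤ) : Prop :=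
  γ ∈ Gamma6nat ∧ γ 1 0 = 6 * a ∧ γ 1 1 = b ∧ γ 1 2 = 6 * c ∧ γ 1 3 = 36 * d

lemma Row.bmove {γ : M4} {a b c d : ℤ} (h : Row γ a b c d) (m n k : ℤ) :
    Row (γ * jmat 1 0 0 1 m n k) (a + 6 * n * d) (b + 6 * (m * a + n * c) + 36 * k * d)
      (c - 6 * m * d) d := by
  obtain ⟨hg, h0, h1, h2, h3⟩ := h
  refine ⟨Gamma6nat_mul hg (bmat_mem m n k), ?_, ?_, ?_, ?_⟩ <;>
    simp [Matrix.mul_apply, Fin.sum_univ_four, jmat, h0, h1, h2, h3] <;> ring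

lemma Row.cmove {γ : M4} {a b c d : ℤ} (h : Row γ a b c d) (m n k : ℤ) :
    Row (γ * cmat m n k) (a + n * b) b (c - m * b) (d - m * a - n * c + k * b) := by
  obtain ⟨hg, h0, h1, h2, h3⟩ := h
  refine ⟨Gamma6nat_mul hg (cmat_mem m n k), ?_, ?_, ?_, ?_⟩ <;>
    simp [Matrix.mul_apply, Fin.sum_univ_four, cmat, h0, h1, h2, h3] <;> ring

lemma mul_J4_transpose {γ : M4} (h : γᵀ * J4 * γ = J4) : γ * J4 * γᵀ = J4 := by
  have hJ : J4 * J4 = -1 := by decide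
  have h1 : (-(J4 * γᵀ * J4)) * γ = 1 := by
    rw [neg_mul, mul_assoc, mul_assoc, ← mul_assoc γᵀ, h, hJ, neg_neg]
  have h2 := mul_eq_one_comm.mp h1
  have h3 : γ * (-(J4 * γᵀ * J4)) * J4 = J4 := by rw [h2, one_mul]
  calc γ * J4 * γᵀ = γ * (-(J4 * γᵀ * (-1))) := by simp [mul_assoc]
    _ = γ * (-(J4 * γᵀ * J4)) * J4 := by rw [← hJ]; simp [mul_assoc]
    _ = J4 := h3

lemma inGen_of_row_unit {γ : M4} (h : Row γ 0 1 0 0) : InGen γ := by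
  obtain ⟨⟨hs, hp⟩, h0, h1, h2, h3⟩ := h
  have hs' := mul_J4_transpose hs
  change γᵀ * J4 * γ = J4 at hs
  have e (i j) := congrFun (congrFun hs i) j
  have e' (i j) := congrFun (congrFun hs' i) j
  simp [Matrix.mul_apply, Fin.sum_univ_four, J4] at e e' h0 h1 h2 h3
  have e10 := e' 1 0
  have e12 := e' 1 2
  have e13 := e' 1 3
  have f02 := e 0 2
  have f01 := e 0 1
  have f21 := e 2 1
  simp [h0, h1, h2, h3] at e10 e12 e13 f02 f01 f21
  have g : γ = jmat (γ 0 0) (γ 2 0) (γ 0 2) (γ 2 2) 0 0 0 *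
      jmat 1 0 0 1 (-γ 3 2) (γ 3 0) (γ 3 1) := by
    have g01 : γ 0 1 = -(γ 0 0 * γ 3 2) + γ 0 2 * γ 3 0 := by
      linear_combination (-γ 0 1) * f02 + γ 0 2 * f01 - γ 0 0 * f21
    have g21 : γ 2 1 = -(γ 2 0 * γ 3 2) + γ 2 2 * γ 3 0 := by
      linear_combination (-γ 2 1) * f02 + γ 2 2 * f01 - γ 2 0 * f21
    ext i j
    fin_cases i <;> fin_cases j <;>
      simp [jmat, Matrix.mul_apply, Fin.sum_univ_four, h0, h1, h2, h3, e10, e12, e13, g01, g21]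
  rw [g]
  have p00 := hp 0 0
  have p02 := hp 0 2
  have p20 := hp 2 0
  have p22 := hp 2 2
  simp [pat6] at p00 p02 p20 p22
  exact (levi_inGen _ _ _ _ (by linarith) p00 p20 p02 p22).mul (bmat_inGen _ _ _)

lemma inGen_of_one {γ : M4} {a c d : ℤ} (h : Row γ a 1 c d) : InGen γ := by
  refine (cmat_inGen c (-a) (-d)).of_mul (inGen_of_row_unit ?_)
  have := h.cmove c (-a) (-d)
  ring_nf at this ⊢
  exact this

lemma inGen_of_coprime {γ : M4} {a b c d : ℤ} (h : Row γ a b c d) (hc : IsCoprime a c) :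
    InGen γ := by
  have hb : (6:ℤ) ∣ b - 1 := by
    have := h.1.2 1 1
    simpa [pat6, h.2.2.1] using this
  obtain ⟨t, ht⟩ := hb
  obtain ⟨x, y, hxy⟩ := hc
  refine (bmat_inGen (-t * x) (-t * y) 0).of_mul ?_
  have := h.bmove (-t * x) (-t * y) 0
  have e : b + 6 * (-t * x * a + -t * y * c) + 36 * 0 * d = 1 := by
    linear_combination ht - 6 * t * hxy
  rw [e] at this
  exact inGen_of_one this

lemma exists_coprime_shift (g b d : ℤ) (hg : g ≠ 0) (h : ∀ p : ℕ, p.Prime → (p:ℤ) ∣ g →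
    (p:ℤ) ∣ b → (p:ℤ) ∣ d → False) : ∃ k : ℤ, IsCoprime g (b + k * d) := by
  classical
  set S : Finset ℕ := g.natAbs.primeFactors.filter (fun p : ℕ => ¬ (p:ℤ) ∣ b) with hS
  refine ⟨((∏ p ∈ S, p : ℕ) : ℤ), ?_⟩
  rw [Int.isCoprime_iff_gcd_eq_one]
  by_contra hne
  obtain ⟨p, hp, hpd⟩ := Nat.exists_prime_and_dvd hne
  have h1 : (p:ℤ) ∣ g := (Int.natCast_dvd_natCast.mpr hpd).trans (Int.gcd_dvd_left ..)
  have h2 := (Int.natCast_dvd_natCast.mpr hpd).trans (Int.gcd_dvd_right (a := g) (b := b + ((∏ p ∈ S, p : ℕ) : ℤ) * d))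
  have hpi : Prime (p:ℤ) := Nat.prime_iff_prime_int.mp hp
  by_cases hpb : (p:ℤ) ∣ b
  · have h3 := (dvd_add_right hpb).mp h2
    rcases hpi.dvd_or_dvd h3 with h4 | h4
    · have h5 := Int.natCast_dvd_natCast.mp h4
      obtain ⟨q, hq, hpq⟩ := (hp.prime.dvd_finsetProd_iff _).mp h5
      rw [hS, Finset.mem_filter, Nat.mem_primeFactors] at hq
      have := (Nat.prime_dvd_prime_iff_eq hp hq.1.1).mp hpq
      subst this
      exact hq.2 hpb
    · exact h p hp h1 hpb h4
  · have hm : p ∈ S := by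
      rw [hS, Finset.mem_filter, Nat.mem_primeFactors]
      exact ⟨⟨hp, Int.natCast_dvd.mp h1, Int.natAbs_ne_zero.mpr hg⟩, hpb⟩
    have h3 : (p:ℤ) ∣ ((∏ p ∈ S, p : ℕ) : ℤ) :=
      Int.natCast_dvd_natCast.mpr (Finset.dvd_prod_of_mem _ hm)
    exact hpb ((dvd_add_left (h3.mul_right d)).mp h2)

lemma inGen_of_three {γ : M4} {a b c d : ℤ} (h : Row γ a b c d) (hc : c ≠ 0)
    (hp : ∀ p : ℕ, p.Prime → (p:ℤ) ∣ a → (p:ℤ) ∣ b → (p:ℤ) ∣ c → False) : InGen γ := by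
  obtain ⟨n, hn⟩ := exists_coprime_shift c a b hc (fun p h1 h2 h3 h4 => hp p h1 h3 h4 h2)
  refine (cmat_inGen 0 n 0).of_mul (inGen_of_coprime (h.cmove 0 n 0) ?_)
  simpa using hn.symm

lemma Row.b_ne {γ : M4} {a b c d : ℤ} (h : Row γ a b c d) : b ≠ 0 := by
  have := h.1.2 1 1
  simp [pat6, h.2.2.1] at this
  omega

lemma inGen_of_three' {γ : M4} {a b c d : ℤ} (h : Row γ a b c d)
    (hp : ∀ p : ℕ, p.Prime → (p:ℤ) ∣ a → (p:ℤ) ∣ b → (p:ℤ) ∣ c → False) : InGen γ := by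
  by_cases hc : c = 0
  · subst hc
    refine (cmat_inGen 1 0 0).of_mul (inGen_of_three (h.cmove 1 0 0) ?_ ?_)
    · have := h.b_ne
      simpa using this
    · intro p h1 h2 h3 _
      exact hp p h1 (by simpa using h2) h3 (dvd_zero _)
  · exact inGen_of_three h hc hp

lemma Row.prim {γ : M4} {a b c d : ℤ} (h : Row γ a b c d) (p : ℕ) (hp : p.Prime)
    (ha : (p:ℤ) ∣ a) (hb : (p:ℤ) ∣ b) (hc : (p:ℤ) ∣ c) (hd : (p:ℤ) ∣ 36 * d) : False := by
  obtain ⟨⟨hs, _⟩, h0, h1, h2, h3⟩ := h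
  have e := congrFun (congrFun (mul_J4_transpose hs) 1) 3
  simp [Matrix.mul_apply, Fin.sum_univ_four, J4, h0, h1, h2, h3] at e
  have : (p:ℤ) ∣ 1 := by
    obtain ⟨a, rfl⟩ := ha
    obtain ⟨b, rfl⟩ := hb
    obtain ⟨c, rfl⟩ := hc
    obtain ⟨x, hx⟩ := hd
    rw [hx] at e
    refine ⟨-(6 * c * γ 3 0) - x * γ 3 1 + 6 * a * γ 3 2 + b * γ 3 3, ?_⟩
    linear_combination -e
  exact (Nat.prime_iff_prime_int.mp hp).not_isUnit (isUnit_of_dvd_one this)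

lemma inGen_of_ne {γ : M4} {a b c d : ℤ} (h : Row γ a b c d) (hac : a ≠ 0) :
    InGen γ := by
  obtain ⟨k, hk⟩ := exists_coprime_shift (Int.gcd a c) b (36 * d)
    (by simp [Int.gcd_eq_zero_iff, hac])
    (fun p hp h1 h2 h3 => h.prim p hp (h1.trans (Int.gcd_dvd_left ..)) h2
      (h1.trans (Int.gcd_dvd_right ..)) h3)
  refine (bmat_inGen 0 0 k).of_mul (inGen_of_three' (h.bmove 0 0 k) ?_)
  intro p hp h1 h2 h3
  have h1' : (p:ℤ) ∣ a := by simpa using h1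
  have h3' : (p:ℤ) ∣ c := by simpa using h3
  have h2' : (p:ℤ) ∣ b + k * (36 * d) := by
    convert h2 using 1
    ring
  exact (Nat.prime_iff_prime_int.mp hp).not_isUnit (hk.isUnit_of_dvd' (Int.dvd_coe_gcd h1' h3') h2')

lemma inGen_of_row {γ : M4} {a b c d : ℤ} (h : Row γ a b c d) : InGen γ := by
  by_cases ha : a = 0
  · subst ha
    refine (cmat_inGen 0 1 0).of_mul (inGen_of_ne (h.cmove 0 1 0) ?_)
    have := h.b_ne
    simpa using this
  · exact inGen_of_ne h ha

/-- Γ₆^♮ is contained in the subgroup generated by J₆ and the matrices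
j(δ,[m,n;k]) with δ ∈ Γ(6), m,n,k ∈ ℤ. -/
theorem Gamma6nat_in_generated_subgroup (γ : M4) (hγ : γ ∈ Gamma6nat) :
    ∃ u ∈ Subgroup.closure genSet, (↑u : M4Q) = γ.map (Int.cast : ℤ → ℚ) := by
  obtain ⟨a, ha⟩ := hγ.2 1 0
  obtain ⟨c, hc⟩ := hγ.2 1 2
  obtain ⟨d, hd⟩ := hγ.2 1 3
  simp [pat6] at ha hc hd
  exact inGen_of_row (b := γ 1 1) ⟨hγ, ha, rfl, hc, hd⟩
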